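/- For every positive integer m and every real x ≠ 0, the m-th derivative of the harmonic based exponential function satisfies (d/dx)^m ₕe(x) = ₕe(x) + ∑_{r=0}^{m-1} (d/dx)^r [(e^x - 1 - x)/x]. -/

import Mathlib

open Real MeasureTheory

/-- The `n`-th harmonic number `h_n = ∑_{r=1}^n 1/r`. -/
noncomputable def harm (n : ℕ) : ℝ := ∑ r ∈ Finset.range n, 1 / (r + 1 : ℝ)

/-- The harmonic based exponential function `ₕe(x) = 1 + ∑_{n=1}^∞ h_n x^n / n!`. -/
noncomputable def he (x : ℝ) : ℝ :=
  1 + ∑' n : ℕ, harm (n + 1) * x ^ (n + 1) / (Nat.factorial (n + 1) : ℝ)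

lemma harm_nonneg' (n : ℕ) : 0 ≤ harm n := by
  unfold harm; positivity

lemma harm_le' (n : ℕ) : harm n ≤ n := by
  unfold harm
  calc _ ≤ ∑ r ∈ Finset.range n, (1:ℝ) := by
        apply Finset.sum_le_sum
        intro i _
        rw [div_le_one (by positivity)]
        have : (0:ℝ) ≤ i := by positivity
        linarith
    _ = n := by simp

lemma harm_bound (n : ℕ) (R y : ℝ) (hy : |y| ≤ R) :
    ‖harm (n + 1) * y ^ n / (Nat.factorial n : ℝ)‖ ≤ (2 * R) ^ n / (Nat.factorial n : ℝ) := by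
  have h1 : harm (n + 1) ≤ 2 ^ n := by
    refine (harm_le' _).trans ?_
    exact_mod_cast Nat.lt_two_pow_self (n := n)
  have h0 := harm_nonneg' (n + 1)
  rw [norm_div, norm_mul, norm_pow, Real.norm_eq_abs, Real.norm_eq_abs, Real.norm_eq_abs,
    abs_of_nonneg h0, Nat.abs_cast, mul_pow]
  gcongr

lemma he_term_deriv (n : ℕ) (y : ℝ) :
    HasDerivAt (fun y : ℝ => harm (n + 1) * y ^ (n + 1) / (Nat.factorial (n + 1) : ℝ))
      (harm (n + 1) * y ^ n / (Nat.factorial n : ℝ)) y := by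
  have h := ((hasDerivAt_pow (n + 1) y).const_mul (harm (n + 1))).div_const
    (Nat.factorial (n + 1) : ℝ)
  refine h.congr_deriv ?_
  rw [Nat.factorial_succ]
  have : (Nat.factorial n : ℝ) ≠ 0 := by positivity
  push_cast
  have : (n + 1 : ℝ) ≠ 0 := by positivity
  field_simp

lemma he_summable' (x : ℝ) :
    Summable (fun n : ℕ => harm (n + 1) * x ^ n / (Nat.factorial n : ℝ)) :=
  Summable.of_norm_bounded (Real.summable_pow_div_factorial (2 * |x|))
    (fun n => harm_bound n _ x le_rfl)

lemma he_hasDerivAt_aux (x : ℝ) :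
    HasDerivAt he (∑' n : ℕ, harm (n + 1) * x ^ n / (Nat.factorial n : ℝ)) x := by
  have hx : x ∈ Metric.ball (0:ℝ) (|x| + 1) := by simp
  have h := hasDerivAt_tsum_of_isPreconnected
    (g := fun (n : ℕ) (y : ℝ) => harm (n + 1) * y ^ (n + 1) / (Nat.factorial (n + 1) : ℝ))
    (g' := fun (n : ℕ) (y : ℝ) => harm (n + 1) * y ^ n / (Nat.factorial n : ℝ))
    (Real.summable_pow_div_factorial (2 * (|x| + 1)))
    (Metric.isOpen_ball (x := (0:ℝ)) (ε := |x| + 1))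
    (convex_ball _ _).isPreconnected
    (fun n y _ => he_term_deriv n y)
    (fun n y hy => harm_bound n _ y (by simpa using (Metric.mem_ball.1 hy).le))
    (y₀ := 0) (by simp; positivity) (by simp [summable_zero]) hx
  exact h.const_add 1

lemma he_hasDerivAt (x : ℝ) (hx : x ≠ 0) :
    HasDerivAt he (he x + (Real.exp x - 1 - x) / x) x := by
  refine (he_hasDerivAt_aux x).congr_deriv ?_
  symm
  have hexp : HasSum (fun n : ℕ => x ^ n / (Nat.factorial n : ℝ)) (Real.exp x) := by
    rw [Real.exp_eq_exp_ℝ]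
    exact NormedSpace.expSeries_div_hasSum_exp x
  have h1 : HasSum (fun n : ℕ => x ^ (n + 1) / (Nat.factorial (n + 1) : ℝ)) (Real.exp x - 1) := by
    have := (hasSum_nat_add_iff' 1).2 hexp
    simpa using this
  have h2 : HasSum (fun n : ℕ => x ^ n / (Nat.factorial (n + 1) : ℝ)) ((Real.exp x - 1) / x) := by
    refine (h1.div_const x).congr_fun ?_
    intro n
    rw [pow_succ]
    field_simp
  have h3 : ∀ n : ℕ, harm n * x ^ n / (Nat.factorial n : ℝ) =
      harm (n + 1) * x ^ n / (Nat.factorial n : ℝ) - x ^ n / (Nat.factorial (n + 1) : ℝ) := by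
    intro n
    have e : harm (n + 1) = harm n + 1 / (n + 1 : ℝ) := by
      unfold harm; rw [Finset.sum_range_succ]
    rw [e, Nat.factorial_succ]
    have : (Nat.factorial n : ℝ) ≠ 0 := by positivity
    have : (n + 1 : ℝ) ≠ 0 := by positivity
    push_cast
    field_simp
    ring
  have h4 : HasSum (fun n : ℕ => harm n * x ^ n / (Nat.factorial n : ℝ)) _ :=
    ((he_summable' x).hasSum.sub h2).congr_fun h3
  have h5 := ((hasSum_nat_add_iff' 1).2 h4).tsum_eq
  simp only [he]
  rw [h5]
  simp [harm]
  field_simp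
  ring

lemma g_analyticAt (x : ℝ) (hx : x ≠ 0) :
    AnalyticAt ℝ (fun t : ℝ => (Real.exp t - 1 - t) / t) x := by
  apply AnalyticAt.fun_div _ analyticAt_id hx
  fun_prop

/-- For `m ≥ 1` and `x ≠ 0`,
`(d/dx)^m ₕe(x) = ₕe(x) + ∑_{r=0}^{m-1} (d/dx)^r [(e^x - 1 - x)/x]`. -/
theorem he_iteratedDeriv_recurrence (m : ℕ) (hm : 0 < m) (x : ℝ) (hx : x ≠ 0) :
    iteratedDeriv m he x =
      he x + ∑ r ∈ Finset.range m,
        iteratedDeriv r (fun t : ℝ => (Real.exp t - 1 - t) / t) x := by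
  clear hm
  induction m generalizing x with
  | zero => simp
  | succ m ih =>
    have hev : iteratedDeriv m he =ᶠ[nhds x] fun y => he y + ∑ r ∈ Finset.range m,
        iteratedDeriv r (fun t : ℝ => (Real.exp t - 1 - t) / t) y := by
      filter_upwards [isOpen_ne.mem_nhds hx] with y hy
      exact ih y hy
    rw [iteratedDeriv_succ, hev.deriv_eq]
    have hd : ∀ r ∈ Finset.range m, HasDerivAt
        (fun y => iteratedDeriv r (fun t : ℝ => (Real.exp t - 1 - t) / t) y)
        (iteratedDeriv (r + 1) (fun t : ℝ => (Real.exp t - 1 - t) / t) x) x := by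
      intro r _
      rw [iteratedDeriv_succ]
      apply DifferentiableAt.hasDerivAt
      rw [iteratedDeriv_eq_iterate]
      exact ((g_analyticAt x hx).iterated_deriv r).differentiableAt
    have := (he_hasDerivAt x hx).add (HasDerivAt.fun_sum hd)
    rw [show (fun y => he y + ∑ r ∈ Finset.range m,
        iteratedDeriv r (fun t : ℝ => (Real.exp t - 1 - t) / t) y) = he + _ from rfl, this.deriv,
      Finset.sum_range_succ']
    simp only [iteratedDeriv_zero]
    ring
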